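/- Let P be a vector space partition of F_q^v of type d_l^{u_l}⋯d_2^{u_2}d_1^{u_1}, where u_1, u_2 > 0 and d_l > ⋯ > d_2 > d_1 ≥ 1. If q^{d_2−d_1} divides u_1 and d_2 < 2d_1, then u_1 ≥ q^{d_2} − q^{d_1} + q^{d_2−d_1}. -/

import Mathlib

/-!
For a linear functional `φ`, let `h φ` be the number of members of dimension `d₁` lying in `ker φ`.
If `φ ≠ 0`, counting the vectors with `φ x = 1` through the partition shows that `q ^ (d₂ - d₁)`
divides the number of members of dimension `d₁` not lying in `ker φ`, hence also `h φ`. Therefore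
`q ^ (d₂ - d₁) * h φ ≤ h φ ^ 2` for every `φ`. As the members meet trivially, the first two moments
of `h` over the dual space are explicit, and summing over `φ` gives `q ^ d₂ < u₁ + q ^ d₁`. Both
sides are divisible by `q ^ min d₁ (d₂ - d₁)`, so they differ by at least that much.
-/

open Finset Module

theorem natCard_mul_natCard_fiber {A B : Type*} [AddGroup A] [AddGroup B] {f : A →+ B}
    (hf : Function.Surjective f) (b : B) :
    Nat.card B * Nat.card (f ⁻¹' {b}) = Nat.card A := by
  rw [Nat.card_congr (AddMonoidHom.fiberEquivKerOfSurjective hf b),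
    f.ker.card_eq_card_quotient_mul_card_addSubgroup,
    Nat.card_congr (QuotientAddGroup.quotientKerEquivOfSurjective f hf).toEquiv]

section Functionals

variable {F V : Type*} [Field F] [Fintype F] [AddCommGroup V] [Module F V]

open scoped Classical in
theorem card_mul_card_filter_mem_and_eq_one [Fintype V] {U : Submodule F V} {φ : Dual F V}
    (hφ : φ ∉ U.dualAnnihilator) :
    Fintype.card F * #{x | x ∈ U ∧ φ x = 1} = Fintype.card F ^ finrank F U := by
  have hne : φ.domRestrict U ≠ 0 := fun h ↦
    hφ ((Submodule.mem_dualAnnihilator φ).2 fun x hx ↦ LinearMap.congr_fun h ⟨x, hx⟩)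
  have hfiber : #{x | x ∈ U ∧ φ x = 1} = Nat.card ((φ.domRestrict U).toAddMonoidHom ⁻¹' {1}) := by
    rw [← Fintype.card_subtype, ← Nat.card_eq_fintype_card]
    exact Nat.card_congr (Equiv.subtypeSubtypeEquivSubtypeInter (· ∈ U) (φ · = 1)).symm
  rw [hfiber, ← Nat.card_eq_fintype_card, ← natCard_eq_pow_finrank]
  exact natCard_mul_natCard_fiber (LinearMap.surjective hne) 1

open scoped Classical in
theorem pow_finrank_mul_card_filter_mem_dualAnnihilator [Module.Finite F V] [Fintype (Dual F V)]
    (U : Submodule F V) :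
    Fintype.card F ^ finrank F U * #{φ | φ ∈ U.dualAnnihilator} =
      Fintype.card F ^ finrank F V := by
  rw [← Fintype.card_subtype, card_eq_pow_finrank (K := F) (V := U.dualAnnihilator), ← pow_add,
    Subspace.finrank_add_finrank_dualAnnihilator_eq]

end Functionals

section Moments

variable {F V : Type*} [Field F] [AddCommGroup V] [Module F V] [Fintype (Dual F V)]
  {T : Finset (Submodule F V)} {k : ℕ}

open scoped Classical in
theorem sum_card_filter_mem_dualAnnihilator_sq :
    ∑ φ : Dual F V, #{U ∈ T | φ ∈ U.dualAnnihilator} ^ 2 =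
      ∑ p ∈ T ×ˢ T, #{φ | φ ∈ (p.1 ⊔ p.2).dualAnnihilator} := by
  have hswap : ∑ φ : Dual F V, #{p ∈ T ×ˢ T | φ ∈ (p.1 ⊔ p.2).dualAnnihilator} =
      ∑ p ∈ T ×ˢ T, #{φ | φ ∈ (p.1 ⊔ p.2).dualAnnihilator} :=
    sum_card_bipartiteAbove_eq_sum_card_bipartiteBelow _
  rw [← hswap]
  refine sum_congr rfl fun φ _ ↦ ?_
  simp only [Submodule.dualAnnihilator_sup_eq, Submodule.mem_inf]
  rw [sq, ← card_product, ← filter_product]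

variable [Fintype F] [Module.Finite F V]

open scoped Classical in
theorem pow_mul_sum_card_filter_mem_dualAnnihilator (hk : ∀ U ∈ T, finrank F U = k) :
    Fintype.card F ^ k * ∑ φ : Dual F V, #{U ∈ T | φ ∈ U.dualAnnihilator} =
      #T * Fintype.card F ^ finrank F V := by
  have hswap : ∑ φ : Dual F V, #{U ∈ T | φ ∈ U.dualAnnihilator} =
      ∑ U ∈ T, #{φ | φ ∈ U.dualAnnihilator} :=
    sum_card_bipartiteAbove_eq_sum_card_bipartiteBelow _
  rw [hswap, mul_sum, ← smul_eq_mul, ← sum_const]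
  refine sum_congr rfl fun U hU ↦ ?_
  rw [← hk U hU, pow_finrank_mul_card_filter_mem_dualAnnihilator]

-- The factor `q ^ (2 * k)` and the extra summand on the left clear the truncated subtractions in
-- `∑ h φ ^ 2 = n * (q ^ (v - k) + (n - 1) * q ^ (v - 2 * k))`, where `n = #T`, `v = dim V`.
open scoped Classical in
theorem pow_mul_sum_card_filter_mem_dualAnnihilator_sq (hk : ∀ U ∈ T, finrank F U = k)
    (hT : (T : Set (Submodule F V)).Pairwise Disjoint) :
    Fintype.card F ^ (2 * k) * ∑ φ : Dual F V, #{U ∈ T | φ ∈ U.dualAnnihilator} ^ 2 +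
        #T * Fintype.card F ^ finrank F V =
      #T * (Fintype.card F ^ k + #T) * Fintype.card F ^ finrank F V := by
  have hdiag : ∀ p ∈ T.diag, Fintype.card F ^ (2 * k) *
      #{φ | φ ∈ (p.1 ⊔ p.2).dualAnnihilator} =
        Fintype.card F ^ k * Fintype.card F ^ finrank F V := by
    rintro ⟨U, W⟩ hUW
    obtain ⟨hU, rfl : U = W⟩ := mem_diag.1 hUW
    rw [two_mul, pow_add, mul_assoc, sup_idem, ← hk U hU,
      pow_finrank_mul_card_filter_mem_dualAnnihilator]
  have hoffDiag : ∀ p ∈ T.offDiag, Fintype.card F ^ (2 * k) *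
      #{φ | φ ∈ (p.1 ⊔ p.2).dualAnnihilator} = Fintype.card F ^ finrank F V := by
    rintro ⟨U, W⟩ hUW
    obtain ⟨hU, hW, hne⟩ := mem_offDiag.1 hUW
    have hsup : finrank F (U ⊔ W : Submodule F V) = 2 * k := by
      have h := Submodule.finrank_sup_add_finrank_inf_eq U W
      rwa [(hT hU hW hne).eq_bot, finrank_bot, hk U hU, hk W hW, ← two_mul] at h
    rw [← hsup, pow_finrank_mul_card_filter_mem_dualAnnihilator]
  have hcard : #T.offDiag + #T = #T * #T := by
    rw [offDiag_card, Nat.sub_add_cancel (Nat.le_mul_self _)]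
  rw [sum_card_filter_mem_dualAnnihilator_sq, mul_sum, ← diag_union_offDiag,
    sum_union (disjoint_diag_offDiag T), sum_congr rfl hdiag, sum_congr rfl hoffDiag, sum_const,
    sum_const, diag_card, smul_eq_mul, smul_eq_mul, add_assoc, ← add_mul, hcard]
  ring

end Moments

open scoped Classical in
theorem mul_pow_lt_card_add_pow_of_dvd {F V : Type*} [Field F] [Fintype F] [AddCommGroup V]
    [Module F V] [Module.Finite F V] {T : Finset (Submodule F V)} {k m : ℕ} (hne : T.Nonempty)
    (hk : ∀ U ∈ T, finrank F U = k) (hT : (T : Set (Submodule F V)).Pairwise Disjoint)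
    (hm : ∀ φ : Dual F V, m ∣ #{U ∈ T | φ ∈ U.dualAnnihilator}) :
    m * Fintype.card F ^ k < #T + Fintype.card F ^ k := by
  have := Module.finite_of_finite F (M := Dual F V)
  have := Fintype.ofFinite (Dual F V)
  set q := Fintype.card F
  set h : Dual F V → ℕ := fun φ ↦ #{U ∈ T | φ ∈ U.dualAnnihilator}
  have hle : m * ∑ φ, h φ ≤ ∑ φ, h φ ^ 2 := by
    rw [mul_sum]
    refine sum_le_sum fun φ _ ↦ ?_
    obtain h0 | hpos := (h φ).eq_zero_or_pos
    · simp [h0]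
    · rw [sq]
      exact Nat.mul_le_mul_right _ (Nat.le_of_dvd hpos (hm φ))
  have hfirst : q ^ k * ∑ φ, h φ = #T * q ^ finrank F V :=
    pow_mul_sum_card_filter_mem_dualAnnihilator hk
  have hsecond : q ^ (2 * k) * ∑ φ, h φ ^ 2 + #T * q ^ finrank F V =
      #T * (q ^ k + #T) * q ^ finrank F V :=
    pow_mul_sum_card_filter_mem_dualAnnihilator_sq hk hT
  have hpos : 0 < #T * q ^ finrank F V :=
    Nat.mul_pos hne.card_pos (Nat.pow_pos Fintype.card_pos)
  refine Nat.lt_of_succ_le (Nat.le_of_mul_le_mul_left ?_ hpos)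
  calc #T * q ^ finrank F V * (m * q ^ k + 1)
      = q ^ (2 * k) * (m * ∑ φ, h φ) + #T * q ^ finrank F V := by
        rw [mul_add, mul_one, ← hfirst]; ring
    _ ≤ q ^ (2 * k) * ∑ φ, h φ ^ 2 + #T * q ^ finrank F V := by gcongr
    _ = #T * q ^ finrank F V * (#T + q ^ k) := by rw [hsecond]; ring

/-- A vector space partition: a collection of subspaces covering every nonzero vector exactly once.
The zero subspace is allowed as a member. -/
def IsVectorSpacePartition {F V : Type*} [Field F] [AddCommGroup V] [Module F V]
    (P : Finset (Submodule F V)) : Prop :=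
  ∀ x : V, x ≠ 0 → ∃! U : Submodule F V, U ∈ P ∧ x ∈ U

/-- `P` has type `d_l^{u_l}⋯d_1^{u_1}`: its members have dimensions among the `d i`, and exactly
`u i` of them have dimension `d i`. Indices start at `0`, so `d_1` is `d 0`, and `u i = 0` is
allowed. -/
structure HasDimensionType {F V : Type*} [Field F] [AddCommGroup V] [Module F V] {l : ℕ}
    (P : Finset (Submodule F V)) (d u : Fin l → ℕ) : Prop where
  strictMono : StrictMono d
  exists_finrank_eq : ∀ U ∈ P, ∃ i, finrank F U = d i
  eq_ncard : ∀ i, u i = {U : Submodule F V | U ∈ P ∧ finrank F U = d i}.ncard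

section MembersOfFinrank

variable {F V : Type*} [Field F] [AddCommGroup V] [Module F V]

open scoped Classical in
/-- The members of `P` of dimension `k`; for the least such `k` this is the tail of `P`. -/
noncomputable def membersOfFinrank (P : Finset (Submodule F V)) (k : ℕ) :
    Finset (Submodule F V) :=
  P.filter fun U ↦ finrank F U = k

theorem mem_membersOfFinrank {P : Finset (Submodule F V)} {k : ℕ} {U : Submodule F V} :
    U ∈ membersOfFinrank P k ↔ U ∈ P ∧ finrank F U = k :=
  mem_filter

end MembersOfFinrank

namespace IsVectorSpacePartition

variable {F V : Type*} [Field F] [AddCommGroup V] [Module F V] {P : Finset (Submodule F V)}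

theorem pairwise_disjoint (hP : IsVectorSpacePartition P) :
    (P : Set (Submodule F V)).Pairwise Disjoint := by
  intro U hU W hW hne
  rw [Submodule.disjoint_def]
  intro x hxU hxW
  by_contra hx
  exact hne ((hP x hx).unique ⟨hU, hxU⟩ ⟨hW, hxW⟩)

open scoped Classical in
theorem sum_card_filter_mem (hP : IsVectorSpacePartition P) {S : Finset V} (hS : 0 ∉ S) :
    ∑ U ∈ P, #{x ∈ S | x ∈ U} = #S := by
  rw [card_eq_sum_ones]
  refine (sum_card_bipartiteAbove_eq_sum_card_bipartiteBelow
    fun (x : V) (U : Submodule F V) ↦ x ∈ U).symm.trans (sum_congr rfl fun x hx ↦ ?_)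
  rw [card_eq_one, singleton_iff_unique_mem]
  simpa only [mem_bipartiteAbove] using hP x (ne_of_mem_of_not_mem hx hS)

variable [Fintype F] [Module.Finite F V] {d₁ d₂ : ℕ}

open scoped Classical in
theorem sum_pow_finrank_filter_notMem_dualAnnihilator (hP : IsVectorSpacePartition P)
    {φ : Dual F V} (hφ : φ ≠ 0) :
    ∑ U ∈ P with φ ∉ U.dualAnnihilator, Fintype.card F ^ finrank F U =
      Fintype.card F ^ finrank F V := by
  have := Module.finite_of_finite F (M := V)
  have := Fintype.ofFinite V
  have hcount := hP.sum_card_filter_mem (S := {x | φ x = 1}) (by simp)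
  have htop : Fintype.card F * #{x | φ x = 1} = Fintype.card F ^ finrank F V := by
    have h := card_mul_card_filter_mem_and_eq_one (U := ⊤) (φ := φ) (by simpa using hφ)
    simpa only [Submodule.mem_top, true_and, finrank_top] using h
  rw [← htop, ← hcount, mul_sum, sum_filter]
  refine sum_congr rfl fun U _ ↦ ?_
  simp only [filter_filter]
  by_cases hU : φ ∈ U.dualAnnihilator
  · have hempty : ∀ x, φ x = 1 → x ∉ U := fun x h1 hx ↦
      zero_ne_one (((Submodule.mem_dualAnnihilator φ).1 hU x hx).symm.trans h1)
    simp +contextual [hU, hempty]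
  · rw [if_pos hU, ← card_mul_card_filter_mem_and_eq_one hU]
    simp only [and_comm]

open scoped Classical in
theorem pow_dvd_card_filter_mem_dualAnnihilator (hP : IsVectorSpacePartition P) (hd : d₁ ≤ d₂)
    (hdim : ∀ U ∈ P, finrank F U = d₁ ∨ d₂ ≤ finrank F U) (hV : d₂ ≤ finrank F V)
    (hdvd : Fintype.card F ^ (d₂ - d₁) ∣ #(membersOfFinrank P d₁)) (φ : Dual F V) :
    Fintype.card F ^ (d₂ - d₁) ∣
      #{U ∈ membersOfFinrank P d₁ | φ ∈ U.dualAnnihilator} := by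
  obtain rfl | hφ := eq_or_ne φ 0
  · simpa only [zero_mem, filter_true] using hdvd
  set q := Fintype.card F
  set T := membersOfFinrank P d₁
  have hTP : T ⊆ P := fun U hU ↦ (mem_membersOfFinrank.1 hU).1
  have hsmall : ∑ U ∈ T with φ ∉ U.dualAnnihilator, q ^ finrank F U =
      q ^ d₁ * #{U ∈ T | φ ∉ U.dualAnnihilator} := by
    rw [mul_comm, ← smul_eq_mul, ← sum_const]
    exact sum_congr rfl fun U hU ↦ by rw [(mem_membersOfFinrank.1 (mem_filter.1 hU).1).2]
  have hlarge : q ^ d₂ ∣ ∑ U ∈ P \ T with φ ∉ U.dualAnnihilator, q ^ finrank F U := by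
    refine dvd_sum fun U hU ↦ pow_dvd_pow _ ?_
    obtain ⟨hUP, hUT⟩ := mem_sdiff.1 (mem_filter.1 hU).1
    exact (hdim U hUP).resolve_left fun h ↦ hUT (mem_membersOfFinrank.2 ⟨hUP, h⟩)
  have hsplit : q ^ d₁ * #{U ∈ T | φ ∉ U.dualAnnihilator} +
      ∑ U ∈ P \ T with φ ∉ U.dualAnnihilator, q ^ finrank F U = q ^ finrank F V := by
    rw [← hP.sum_pow_finrank_filter_notMem_dualAnnihilator hφ, ← hsmall, sum_filter,
      sum_filter, sum_filter, add_comm, sum_sdiff hTP]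
  have hnot : q ^ (d₂ - d₁) ∣ #{U ∈ T | φ ∉ U.dualAnnihilator} := by
    refine Nat.dvd_of_mul_dvd_mul_left (Nat.pow_pos (n := d₁) (Fintype.card_pos (α := F))) ?_
    rw [← pow_add, Nat.add_sub_cancel' hd, Nat.dvd_add_iff_left hlarge, hsplit]
    exact pow_dvd_pow _ hV
  rwa [Nat.dvd_add_iff_left hnot, card_filter_add_card_filter_not]

theorem pow_lt_card_membersOfFinrank_add_pow (hP : IsVectorSpacePartition P) (hd : d₁ ≤ d₂)
    (hdim : ∀ U ∈ P, finrank F U = d₁ ∨ d₂ ≤ finrank F U) (hV : d₂ ≤ finrank F V)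
    (hne : (membersOfFinrank P d₁).Nonempty)
    (hdvd : Fintype.card F ^ (d₂ - d₁) ∣ #(membersOfFinrank P d₁)) :
    Fintype.card F ^ d₂ < #(membersOfFinrank P d₁) + Fintype.card F ^ d₁ := by
  have h := mul_pow_lt_card_add_pow_of_dvd hne (fun U hU ↦ (mem_membersOfFinrank.1 hU).2)
    (hP.pairwise_disjoint.mono (coe_subset.2 fun _ hU ↦ (mem_membersOfFinrank.1 hU).1))
    (hP.pow_dvd_card_filter_mem_dualAnnihilator hd hdim hV hdvd)
  rwa [← pow_add, Nat.sub_add_cancel hd] at h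

end IsVectorSpacePartition

namespace HasDimensionType

variable {F V : Type*} [Field F] [AddCommGroup V] [Module F V] {P : Finset (Submodule F V)} {l : ℕ}

theorem eq_card {d u : Fin l → ℕ} (hT : HasDimensionType P d u) (i : Fin l) :
    u i = #(membersOfFinrank P (d i)) := by
  simp only [hT.eq_ncard, ← mem_membersOfFinrank, setOfPred_mem, Set.ncard_coe_finset]

theorem exists_of_pos {d u : Fin l → ℕ} (hT : HasDimensionType P d u) {i : Fin l}
    (hi : 0 < u i) : ∃ U ∈ P, finrank F U = d i := by
  rw [hT.eq_ncard] at hi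
  exact Set.nonempty_of_ncard_ne_zero hi.ne'

theorem finrank_eq_or_le {d u : Fin (l + 2) → ℕ} (hT : HasDimensionType P d u)
    {U : Submodule F V} (hU : U ∈ P) : finrank F U = d 0 ∨ d 1 ≤ finrank F U := by
  obtain ⟨i, hi⟩ := hT.exists_finrank_eq U hU
  obtain rfl | h0 := eq_or_ne i 0
  · exact Or.inl hi
  · exact Or.inr (hi ▸ hT.strictMono.monotone (Fin.one_le_of_ne_zero h0))

end HasDimensionType

theorem heden_tail_iii_general {F V : Type*} [Field F] [Fintype F] [AddCommGroup V] [Module F V]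
    [Module.Finite F V] {l : ℕ} {P : Finset (Submodule F V)} {d u : Fin (l + 2) → ℕ}
    (hP : IsVectorSpacePartition P) (hT : HasDimensionType P d u) (hu₁ : 0 < u 0) (hu₂ : 0 < u 1)
    (hdvd : Fintype.card F ^ (d 1 - d 0) ∣ u 0) :
    Fintype.card F ^ d 1 - Fintype.card F ^ d 0 + Fintype.card F ^ min (d 0) (d 1 - d 0) ≤ u 0 := by
  set q := Fintype.card F
  have hd : d 0 ≤ d 1 := hT.strictMono.monotone (Fin.zero_le 1)
  obtain ⟨U, -, hU⟩ := hT.exists_of_pos hu₂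
  have hV : d 1 ≤ finrank F V := hU ▸ U.finrank_le
  have hlt : q ^ d 1 < u 0 + q ^ d 0 := by
    rw [hT.eq_card] at hu₁ hdvd ⊢
    exact hP.pow_lt_card_membersOfFinrank_add_pow hd (fun _ ↦ hT.finrank_eq_or_le) hV
      (card_pos.1 hu₁) hdvd
  have hleft : q ^ min (d 0) (d 1 - d 0) ∣ q ^ d 1 :=
    pow_dvd_pow q ((min_le_left _ _).trans hd)
  have hright : q ^ min (d 0) (d 1 - d 0) ∣ u 0 + q ^ d 0 :=
    dvd_add ((pow_dvd_pow q (min_le_right _ _)).trans hdvd) (pow_dvd_pow q (min_le_left _ _))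
  have hmod : q ^ d 1 ≡ u 0 + q ^ d 0 [MOD q ^ min (d 0) (d 1 - d 0)] :=
    (Nat.modEq_zero_iff_dvd.2 hleft).trans (Nat.modEq_zero_iff_dvd.2 hright).symm
  have hle := hmod.add_le_of_lt hlt
  have hpow : q ^ d 0 ≤ q ^ d 1 := Nat.pow_le_pow_right Fintype.card_pos hd
  omega

/-- Heden Theorem 1(iii): if `q^{d_2-d_1} ∣ u_1` and `d_2 < 2d_1`, then
`u_1 ≥ q^{d_2} - q^{d_1} + q^{d_2-d_1}`. Here `d 0 = d_1`, `d 1 = d_2`. -/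
theorem heden_tail_iii
    {F : Type} [Field F] [Fintype F] (q v l : ℕ)
    (hq : q = Fintype.card F) (hl : 2 ≤ l)
    (d u : Fin l → ℕ) (hd : StrictMono d) (hd1 : 1 ≤ d ⟨0, by omega⟩)
    (hu1 : 0 < u ⟨0, by omega⟩) (hu2 : 0 < u ⟨1, by omega⟩)
    (P : Finset (Submodule F (Fin v → F)))
    (hpart : ∀ x : Fin v → F, x ≠ 0 →
      ∃! U : Submodule F (Fin v → F), U ∈ P ∧ x ∈ U)
    (htype : ∀ U ∈ P, ∃ i : Fin l, Module.finrank F ↥U = d i)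
    (hcount : ∀ i : Fin l, u i = Set.ncard
      {U : Submodule F (Fin v → F) | U ∈ P ∧ Module.finrank F ↥U = d i})
    (hdvd : q ^ (d ⟨1, by omega⟩ - d ⟨0, by omega⟩) ∣ u ⟨0, by omega⟩)
    (hcase : d ⟨1, by omega⟩ < 2 * d ⟨0, by omega⟩) :
    q ^ d ⟨1, by omega⟩ - q ^ d ⟨0, by omega⟩ + q ^ (d ⟨1, by omega⟩ - d ⟨0, by omega⟩)
      ≤ u ⟨0, by omega⟩ := by
  subst hq
  obtain ⟨l, rfl⟩ := Nat.exists_eq_add_of_le' hl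
  exact min_eq_right (Nat.sub_le_of_le_add (two_mul (d 0) ▸ hcase.le)) ▸
    heden_tail_iii_general hpart ⟨hd, htype, hcount⟩ hu1 hu2 hdvd
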